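/- arXiv:2209.10140 — 3 statements merged into one kernel-verified Lean document; each statement's English description precedes it below -/
import Mathlib

section
/- For every α with 0 ≤ α < 1, the function β ↦ (β²+1)^{1−α/2} F(α,β) is strictly monotonically increasing on [0,∞). -/
/-! The factor `(β² + 1)^(1 - α/2)` cancels the weight in front of the integral, leaving
`β (β² + 1)^(-α/2) - α ∫ θ in -arctan β..π/2, cos θ ^ α`. Since `cos (arctan β) = (β² + 1)^(-1/2)`,
the derivative of the integral is `(β² + 1)^(-α/2 - 1)`, and the two contributions combine to the
positive derivative `(1 - α) (β² + 1)^(-α/2)`. -/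

open MeasureTheory Real

/-- `F α β = β/(β²+1) − (α/(β²+1)^{1−α/2}) ∫_{−arctan β}^{π/2} cos^α θ dθ`. -/
noncomputable def F (α β : ℝ) : ℝ :=
  β / (β ^ 2 + 1) -
    α / (β ^ 2 + 1) ^ (1 - α / 2) * ∫ θ in (-Real.arctan β)..(Real.pi / 2), Real.cos θ ^ α

theorem cos_arctan_rpow (x r : ℝ) : cos (arctan x) ^ r = (x ^ 2 + 1) ^ (-r / 2) := by
  have hx : 0 ≤ x ^ 2 + 1 := by positivity
  rw [cos_arctan, add_comm 1, one_div, sqrt_eq_rpow, ← rpow_neg hx, ← rpow_mul hx]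
  ring_nf

theorem intervalIntegrable_sin_rpow {r a : ℝ} (hr : -1 < r) (ha₀ : 0 ≤ a) (haπ : a < π) :
    IntervalIntegrable (fun θ ↦ sin θ ^ r) volume 0 a := by
  have sinc_pos : ∀ θ ∈ Set.uIcc 0 a, 0 < sinc θ := by
    intro θ hθ
    rw [Set.uIcc_of_le ha₀] at hθ
    rcases hθ.1.eq_or_lt with rfl | hθ₀
    · simp
    · rw [sinc_of_ne_zero hθ₀.ne']
      exact div_pos (sin_pos_of_pos_of_lt_pi hθ₀ (hθ.2.trans_lt haπ)) hθ₀
  have sinc_rpow_cont : ContinuousOn (fun θ ↦ sinc θ ^ r) (Set.uIcc 0 a) :=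
    continuous_sinc.continuousOn.rpow_const fun θ hθ ↦ Or.inl (sinc_pos θ hθ).ne'
  refine ((intervalIntegral.intervalIntegrable_rpow' hr).mul_continuousOn
    sinc_rpow_cont).congr fun θ hθ ↦ ?_
  have hθ₀ : 0 < θ := by
    rw [Set.uIoc_of_le ha₀] at hθ
    exact hθ.1
  change θ ^ r * sinc θ ^ r = sin θ ^ r
  rw [← mul_rpow hθ₀.le (sinc_pos θ (Set.uIoc_subset_uIcc hθ)).le, sinc_of_ne_zero hθ₀.ne',
    mul_div_cancel₀ _ hθ₀.ne']

theorem intervalIntegrable_cos_rpow {r a : ℝ} (hr : -1 < r) (ha : -(π / 2) < a)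
    (ha' : a ≤ π / 2) : IntervalIntegrable (fun θ ↦ cos θ ^ r) volume a (π / 2) := by
  have h := (intervalIntegrable_sin_rpow (a := π / 2 - a) hr (by linarith)
    (by linarith)).comp_sub_left (π / 2)
  simpa only [sin_pi_div_two_sub, sub_zero, sub_sub_cancel] using h.symm

theorem hasDerivAt_integral_cos_rpow_neg_arctan {r : ℝ} (hr : -1 < r) (x : ℝ) :
    HasDerivAt (fun x ↦ ∫ θ in (-arctan x)..(π / 2), cos θ ^ r)
      ((x ^ 2 + 1) ^ (-r / 2 - 1)) x := by
  have cos_ne_zero : cos (-arctan x) ≠ 0 := by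
    rw [cos_neg]
    exact (cos_arctan_pos x).ne'
  have integrable : IntervalIntegrable (fun θ ↦ cos θ ^ r) volume (-arctan x) (π / 2) :=
    intervalIntegrable_cos_rpow hr (neg_lt_neg (arctan_lt_pi_div_two x))
      (neg_le.mp (neg_pi_div_two_lt_arctan x).le)
  have measurable : Measurable fun θ : ℝ ↦ cos θ ^ r := measurable_cos.pow_const r
  have deriv_endpoint := intervalIntegral.integral_hasDerivAt_left integrable
    measurable.stronglyMeasurable.stronglyMeasurableAtFilter
    (continuous_cos.continuousAt.rpow_const (Or.inl cos_ne_zero))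
  refine (deriv_endpoint.comp x (hasDerivAt_arctan x).neg).congr_deriv ?_
  rw [cos_neg, cos_arctan_rpow, rpow_sub_one (by positivity)]
  ring

theorem hasDerivAt_mul_sq_add_one_rpow (p x : ℝ) :
    HasDerivAt (fun x ↦ x * (x ^ 2 + 1) ^ p)
      ((x ^ 2 + 1) ^ p + 2 * p * x ^ 2 * (x ^ 2 + 1) ^ (p - 1)) x := by
  have hx : x ^ 2 + 1 ≠ 0 := by positivity
  have deriv_base : HasDerivAt (fun x : ℝ ↦ x ^ 2 + 1) (2 * x) x := by
    simpa using (hasDerivAt_pow 2 x).add_const 1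
  refine ((hasDerivAt_id' x).mul (deriv_base.rpow_const (Or.inl hx))).congr_deriv ?_
  ring

theorem sq_add_one_rpow_mul_F (α β : ℝ) :
    (β ^ 2 + 1) ^ (1 - α / 2) * F α β =
      β * (β ^ 2 + 1) ^ (-α / 2) - α * ∫ θ in (-arctan β)..(π / 2), cos θ ^ α := by
  have hβ : 0 < β ^ 2 + 1 := by positivity
  have rpow_split : (β ^ 2 + 1) ^ (1 - α / 2) = (β ^ 2 + 1) * (β ^ 2 + 1) ^ (-α / 2) := by
    rw [sub_eq_add_neg, ← neg_div, rpow_add hβ, rpow_one]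
  rw [F, rpow_split]
  field_simp

theorem hasDerivAt_sq_add_one_rpow_mul_F {α : ℝ} (hα : -1 < α) (β : ℝ) :
    HasDerivAt (fun β ↦ (β ^ 2 + 1) ^ (1 - α / 2) * F α β)
      ((1 - α) * (β ^ 2 + 1) ^ (-α / 2)) β := by
  have hβ : β ^ 2 + 1 ≠ 0 := by positivity
  simp only [sq_add_one_rpow_mul_F]
  refine ((hasDerivAt_mul_sq_add_one_rpow (-α / 2) β).sub
    ((hasDerivAt_integral_cos_rpow_neg_arctan hα β).const_mul α)).congr_deriv ?_
  rw [rpow_sub_one hβ]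
  field_simp
  ring

theorem stmt2_general {α : ℝ} (hα : -1 < α) (hα1 : α < 1) :
    StrictMono fun β : ℝ ↦ (β ^ 2 + 1) ^ (1 - α / 2) * F α β := by
  refine strictMono_of_deriv_pos fun β ↦ ?_
  rw [(hasDerivAt_sq_add_one_rpow_mul_F hα β).deriv]
  exact mul_pos (sub_pos.mpr hα1) (rpow_pos_of_pos (by positivity) _)

theorem stmt2 (α : ℝ) (hα0 : 0 ≤ α) (hα1 : α < 1) :
    StrictMonoOn (fun b : ℝ => (b ^ 2 + 1) ^ (1 - α / 2) * F α b) (Set.Ici 0) :=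
  (stmt2_general (neg_one_lt_zero.trans_le hα0) hα1).strictMonoOn _
end

section
/- For every α with 0 ≤ α < 2 there exists a constant C_α > 0, depending only on α, such that for every β ≥ 0, every M > 0, and every a with 0 < a ≤ M/2, one has |∫_0^{M/max(β,1)} ((α+1)(a−M)² − y²) / ((a−M)² + y²)^{2+α/2} dy| ≤ C_α / M^{1+α}. -/
/-!
The integrand is homogeneous of degree `-(2 + α)` in `(a - M, y)`, hence at most a constant times
`|a - M| ^ (-(2 + α))`. As `|a - M| ≥ M / 2` and the interval of integration has length at most
`M`, the integral is `O(M ^ (-(1 + α)))`, and no cancellation in the numerator is needed.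
-/

open MeasureTheory Real

theorem abs_mul_sq_sub_sq_le (p x y : ℝ) :
    |p * x ^ 2 - y ^ 2| ≤ max |p| 1 * (x ^ 2 + y ^ 2) :=
  calc |p * x ^ 2 - y ^ 2|
      ≤ |p * x ^ 2| + |y ^ 2| := abs_sub _ _
    _ = |p| * x ^ 2 + 1 * y ^ 2 := by rw [abs_mul, abs_sq, abs_sq, one_mul]
    _ ≤ max |p| 1 * x ^ 2 + max |p| 1 * y ^ 2 := by
      gcongr
      exacts [le_max_left _ _, le_max_right _ _]
    _ = max |p| 1 * (x ^ 2 + y ^ 2) := by ring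

theorem abs_rpow_two_mul_le_sq_add_sq_rpow {q : ℝ} (hq : 0 ≤ q) (x y : ℝ) :
    |x| ^ (2 * q) ≤ (x ^ 2 + y ^ 2) ^ q :=
  calc |x| ^ (2 * q)
      = (x ^ 2) ^ q := by rw [rpow_mul (abs_nonneg x), rpow_two, sq_abs]
    _ ≤ (x ^ 2 + y ^ 2) ^ q :=
      rpow_le_rpow (sq_nonneg x) (le_add_of_nonneg_right (sq_nonneg y)) hq

theorem abs_mul_sq_sub_sq_div_rpow_le {q x : ℝ} (hq : 0 ≤ q) (hx : x ≠ 0) (p y : ℝ) :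
    |(p * x ^ 2 - y ^ 2) / (x ^ 2 + y ^ 2) ^ (1 + q)| ≤ max |p| 1 / |x| ^ (2 * q) := by
  have hr : 0 < x ^ 2 + y ^ 2 := by positivity
  calc |(p * x ^ 2 - y ^ 2) / (x ^ 2 + y ^ 2) ^ (1 + q)|
      = |p * x ^ 2 - y ^ 2| / ((x ^ 2 + y ^ 2) * (x ^ 2 + y ^ 2) ^ q) := by
        rw [abs_div, abs_of_pos (rpow_pos_of_pos hr _), rpow_one_add' hr.le (by positivity)]
    _ ≤ max |p| 1 * (x ^ 2 + y ^ 2) / ((x ^ 2 + y ^ 2) * (x ^ 2 + y ^ 2) ^ q) := by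
        gcongr
        exact abs_mul_sq_sub_sq_le p x y
    _ = max |p| 1 / (x ^ 2 + y ^ 2) ^ q := by
        rw [mul_comm (max |p| 1), mul_div_mul_left _ _ hr.ne']
    _ ≤ max |p| 1 / |x| ^ (2 * q) := by
        gcongr
        exact abs_rpow_two_mul_le_sq_add_sq_rpow hq x y

theorem abs_setIntegral_mul_sq_sub_sq_div_rpow_le {μ : Measure ℝ} {s : Set ℝ} {q x : ℝ}
    (hs : μ s < ⊤) (hq : 0 ≤ q) (hx : x ≠ 0) (p : ℝ) :
    |∫ y in s, (p * x ^ 2 - y ^ 2) / (x ^ 2 + y ^ 2) ^ (1 + q) ∂μ| ≤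
      max |p| 1 / |x| ^ (2 * q) * μ.real s := by
  rw [← norm_eq_abs]
  exact norm_setIntegral_le_of_norm_le_const hs fun y _ ↦ abs_mul_sq_sub_sq_div_rpow_le hq hx p y

theorem stmt10_general {α M a : ℝ} (hα : -2 ≤ α) (hM : 0 < M) (ha : a ≤ M / 2) (β : ℝ) :
    |∫ y in Set.Ioo 0 (M / max β 1),
        ((α + 1) * (a - M) ^ 2 - y ^ 2) / ((a - M) ^ 2 + y ^ 2) ^ (2 + α / 2)| ≤
      max |α + 1| 1 * 2 ^ (2 + α) / M ^ (1 + α) := by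
  have hdist : M / 2 ≤ |a - M| := by
    rw [abs_sub_comm]
    exact (by linarith : M / 2 ≤ M - a).trans (le_abs_self _)
  have hne : a - M ≠ 0 := abs_pos.mp ((half_pos hM).trans_le hdist)
  have hlength : volume.real (Set.Ioo 0 (M / max β 1)) ≤ M := by
    rw [volume_real_Ioo_of_le (by positivity), sub_zero]
    exact div_le_self hM.le (le_max_right _ _)
  have hsplit : M ^ (2 + α) = M * M ^ (1 + α) := by
    rw [show 2 + α = 1 + (1 + α) by ring, rpow_add hM, rpow_one]
  rw [show 2 + α / 2 = 1 + (1 + α / 2) by ring]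
  calc _ ≤ max |α + 1| 1 / |a - M| ^ (2 * (1 + α / 2)) *
        volume.real (Set.Ioo 0 (M / max β 1)) :=
        abs_setIntegral_mul_sq_sub_sq_div_rpow_le measure_Ioo_lt_top (by linarith) hne (α + 1)
    _ = max |α + 1| 1 / |a - M| ^ (2 + α) * volume.real (Set.Ioo 0 (M / max β 1)) := by
        rw [show 2 * (1 + α / 2) = 2 + α by ring]
    _ ≤ max |α + 1| 1 / (M / 2) ^ (2 + α) * M := by
        gcongr
        linarith
    _ = max |α + 1| 1 * 2 ^ (2 + α) / M ^ (1 + α) := by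
        rw [div_rpow hM.le zero_le_two, hsplit]
        field_simp

theorem stmt10 (α : ℝ) (hα0 : 0 ≤ α) (hα2 : α < 2) :
    ∃ C : ℝ, 0 < C ∧ ∀ β M a : ℝ, 0 ≤ β → 0 < M → 0 < a → a ≤ M / 2 →
      |∫ y in Set.Ioo 0 (M / max β 1),
          ((α + 1) * (a - M) ^ 2 - y ^ 2) / ((a - M) ^ 2 + y ^ 2) ^ (2 + α / 2)| ≤
        C / M ^ (1 + α) :=
  ⟨max |α + 1| 1 * 2 ^ (2 + α), by positivity,
    fun β _ _ _ hM _ ha ↦ stmt10_general (by linarith) hM ha β⟩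
end

section
/- Let 0 ≤ α < 2, β ≥ 0, and M > 0. For a ∈ (0, M), define A(a) := ∫_0^{M/max(β,1)} ( ∫_{βy₂}^{M} (a−y₁)/((a−y₁)² + y₂²)^{1+α/2} dy₁ ) dy₂ (the inner integral converges for a.e. y₂ and the outer integral converges absolutely). Then A is twice differentiable on (0, M) and for every a ∈ (0, M), A″(a) = ∫_0^{M/max(β,1)} [ ((α+1)(a−M)² − y₂²)/((a−M)² + y₂²)^{2+α/2} + (y₂² − (α+1)(a−βy₂)²)/((a−βy₂)² + y₂²)^{2+α/2} ] dy₂. -/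
open MeasureTheory Real

/-!
The kernel `x / (x ^ 2 + y ^ 2) ^ (1 + α / 2)` is the `x`-derivative of a radial potential, so for
`y ≠ 0` the inner integral is the difference of the values of this potential on the two boundary
curves. As `(a, 0)` lies on neither curve, these boundary values stay away from the singularity at
the origin: they and their derivatives in `a` are continuous in `y` up to `y = 0`, and one may
differentiate twice under the outer integral, although the derivative of the kernel itself need not
be integrable over the domain.
-/

section ParametricIntegral

variable {Y 𝕜 E : Type*} [RCLike 𝕜] [NormedAddCommGroup E] [NormedSpace ℝ E] [NormedSpace 𝕜 E]

theorem hasDerivAt_setIntegral_of_continuousOn [TopologicalSpace Y] [T2Space Y] [MeasurableSpace Y]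
    [OpensMeasurableSpace Y] {μ : Measure Y} [IsFiniteMeasureOnCompacts μ] {U : Set 𝕜} {K : Set Y}
    {f f' : 𝕜 → Y → E} {a : 𝕜} (hU : IsOpen U) (hK : IsCompact K)
    (hf : ∀ x ∈ U, ContinuousOn (f x) K) (hf' : ContinuousOn (Function.uncurry f') (U ×ˢ K))
    (hderiv : ∀ x ∈ U, ∀ y ∈ K, HasDerivAt (f · y) (f' x y) x) (ha : a ∈ U) :
    HasDerivAt (fun x ↦ ∫ y in K, f x y ∂μ) (∫ y in K, f' a y ∂μ) a := by
  obtain ⟨ε, hε, hball⟩ := Metric.nhds_basis_closedBall.mem_iff.1 (hU.mem_nhds ha)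
  obtain ⟨C, hC⟩ := ((isCompact_closedBall a ε).prod hK).exists_bound_of_continuousOn
    (hf'.mono (Set.prod_mono hball subset_rfl))
  have hf'_slice : ContinuousOn (f' a) K :=
    hf'.comp (f := fun y ↦ (a, y)) (by fun_prop) fun y hy ↦ ⟨ha, hy⟩
  refine (hasDerivAt_integral_of_dominated_loc_of_deriv_le (bound := fun _ ↦ C)
    (Metric.closedBall_mem_nhds a hε) ?_ ((hf a ha).integrableOn_compact hK)
    (hf'_slice.integrableOn_compact hK).aestronglyMeasurable ?_
    (integrableOn_const hK.measure_ne_top) ?_).2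
  · filter_upwards [hU.mem_nhds ha] with x hx
    exact ((hf x hx).integrableOn_compact hK).aestronglyMeasurable
  · exact ae_restrict_of_forall_mem hK.measurableSet fun y hy x hx ↦ hC (x, y) ⟨hx, hy⟩
  · exact ae_restrict_of_forall_mem hK.measurableSet fun y hy x hx ↦ hderiv x (hball hx) y hy

theorem sub_graph_ne_zero {h : ℝ → ℝ} {x : ℝ} (hx : x ≠ h 0) (y : ℝ) : (x - h y, y) ≠ 0 := by
  intro hxy
  obtain ⟨hxh, rfl⟩ := Prod.mk_eq_zero.1 hxy
  exact hx (sub_eq_zero.1 hxh)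

theorem continuousOn_comp_sub_graph [TopologicalSpace Y] {f : ℝ → ℝ → Y} {h : ℝ → ℝ} {K : Set ℝ}
    (hf : ContinuousOn (Function.uncurry f) {0}ᶜ) (hh : ContinuousOn h K) :
    ContinuousOn (fun p : ℝ × ℝ ↦ f (p.1 - h p.2) p.2) ({h 0}ᶜ ×ˢ K) :=
  hf.comp (f := fun p : ℝ × ℝ ↦ (p.1 - h p.2, p.2))
    ((continuousOn_fst.sub (hh.comp continuousOn_snd fun _ hp ↦ hp.2)).prodMk continuousOn_snd)
    fun p hp ↦ sub_graph_ne_zero hp.1 p.2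

theorem hasDerivAt_setIntegral_sub_graph {μ : Measure ℝ} [IsFiniteMeasureOnCompacts μ]
    {f f' : ℝ → ℝ → E} {b c : ℝ → ℝ} {K : Set ℝ} {a : ℝ}
    (hf : ContinuousOn (Function.uncurry f) {0}ᶜ) (hf' : ContinuousOn (Function.uncurry f') {0}ᶜ)
    (hderiv : ∀ x y, (x, y) ≠ 0 → HasDerivAt (f · y) (f' x y) x) (hK : IsCompact K)
    (hb : ContinuousOn b K) (hc : ContinuousOn c K) (hab : a ≠ b 0) (hac : a ≠ c 0) :
    HasDerivAt (fun x ↦ ∫ y in K, (f (x - b y) y - f (x - c y) y) ∂μ)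
      (∫ y in K, (f' (a - b y) y - f' (a - c y) y) ∂μ) a := by
  have hcont {g : ℝ → ℝ → E} (hg : ContinuousOn (Function.uncurry g) {0}ᶜ) :
      ContinuousOn (fun p : ℝ × ℝ ↦ g (p.1 - b p.2) p.2 - g (p.1 - c p.2) p.2)
        (({b 0}ᶜ ∩ {c 0}ᶜ) ×ˢ K) :=
    ((continuousOn_comp_sub_graph hg hb).mono
        (Set.prod_mono Set.inter_subset_left subset_rfl)).sub
      ((continuousOn_comp_sub_graph hg hc).mono
        (Set.prod_mono Set.inter_subset_right subset_rfl))
  refine hasDerivAt_setIntegral_of_continuousOn (f := fun x y ↦ f (x - b y) y - f (x - c y) y)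
    (f' := fun x y ↦ f' (x - b y) y - f' (x - c y) y)
    (isOpen_compl_singleton.inter isOpen_compl_singleton) hK
    (fun x hx ↦ (hcont hf).comp (f := fun y ↦ (x, y)) (by fun_prop) fun y hy ↦ ⟨hx, hy⟩)
    (hcont hf') (fun x hx y _ ↦ ?_) ⟨hab, hac⟩
  exact ((hderiv _ y (sub_graph_ne_zero hx.1 y)).comp_sub_const x (b y)).sub
    ((hderiv _ y (sub_graph_ne_zero hx.2 y)).comp_sub_const x (c y))

end ParametricIntegral

section RieszKernel

/-- The radial profile of the potential whose gradient is `z / |z| ^ (2 + α)`, as a function of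
`r = |z| ^ 2`. It is normalized to vanish at `r = 1`, so that one formula covers both the powers
`α ≠ 0` and the logarithm `α = 0`. -/
noncomputable def rieszProfile (α r : ℝ) : ℝ := ∫ t in (1 : ℝ)..r, (2 * t ^ (1 + α / 2))⁻¹

/-- The Riesz potential of order `α` on the plane, up to normalization: its gradient at `z = (x, y)`
is `z / |z| ^ (2 + α)`. -/
noncomputable def rieszPotential (α x y : ℝ) : ℝ := rieszProfile α (x ^ 2 + y ^ 2)

/-- The first component `x / |z| ^ (2 + α)` of the gradient of the Riesz potential at
`z = (x, y)`. -/
noncomputable def rieszKernel (α x y : ℝ) : ℝ := x / (x ^ 2 + y ^ 2) ^ (1 + α / 2)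

/-- The derivative of the kernel `rieszKernel α x y` with respect to `x`, away from the origin. -/
noncomputable def rieszKernelDeriv (α x y : ℝ) : ℝ :=
  (y ^ 2 - (α + 1) * x ^ 2) / (x ^ 2 + y ^ 2) ^ (2 + α / 2)

theorem sq_add_sq_pos_of_ne_zero {p : ℝ × ℝ} (hp : p ≠ 0) : 0 < p.1 ^ 2 + p.2 ^ 2 := by
  contrapose! hp
  have hfst : p.1 ^ 2 = 0 := by linarith [sq_nonneg p.1, sq_nonneg p.2]
  have hsnd : p.2 ^ 2 = 0 := by linarith [sq_nonneg p.1, sq_nonneg p.2]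
  exact Prod.ext (pow_eq_zero_iff two_ne_zero |>.1 hfst) (pow_eq_zero_iff two_ne_zero |>.1 hsnd)

theorem continuousOn_sq_add_sq_rpow (q : ℝ) :
    ContinuousOn (fun p : ℝ × ℝ ↦ (p.1 ^ 2 + p.2 ^ 2) ^ q) {0}ᶜ :=
  ContinuousOn.rpow_const (by fun_prop) fun _ hp ↦ .inl (sq_add_sq_pos_of_ne_zero hp).ne'

theorem hasDerivAt_sq_add_sq (x y : ℝ) : HasDerivAt (fun x ↦ x ^ 2 + y ^ 2) (2 * x) x := by
  simpa using (hasDerivAt_pow 2 x).add_const (y ^ 2)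

theorem hasDerivAt_rieszProfile (α : ℝ) {r : ℝ} (hr : 0 < r) :
    HasDerivAt (rieszProfile α) (2 * r ^ (1 + α / 2))⁻¹ r := by
  have hcont : ContinuousOn (fun t : ℝ ↦ (2 * t ^ (1 + α / 2))⁻¹) (Set.Ioi 0) :=
    ContinuousOn.inv₀
      (continuousOn_const.mul (continuousOn_id.rpow_const fun _ ht ↦ .inl (ne_of_gt ht)))
      fun _ ht ↦ (mul_pos two_pos (rpow_pos_of_pos ht _)).ne'
  have hsub : Set.uIcc 1 r ⊆ Set.Ioi 0 := Set.ordConnected_Ioi.uIcc_subset one_pos hr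
  exact intervalIntegral.integral_hasDerivAt_right (hcont.mono hsub).intervalIntegrable
    (hcont.stronglyMeasurableAtFilter isOpen_Ioi r hr) (hcont.continuousAt (Ioi_mem_nhds hr))

theorem hasDerivAt_rieszPotential (α : ℝ) {x y : ℝ} (h : (x, y) ≠ 0) :
    HasDerivAt (rieszPotential α · y) (rieszKernel α x y) x := by
  refine ((hasDerivAt_rieszProfile α (sq_add_sq_pos_of_ne_zero h)).comp x
    (hasDerivAt_sq_add_sq x y)).congr_deriv ?_
  rw [rieszKernel]
  field_simp

theorem hasDerivAt_rieszKernel (α : ℝ) {x y : ℝ} (h : (x, y) ≠ 0) :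
    HasDerivAt (rieszKernel α · y) (rieszKernelDeriv α x y) x := by
  have hr : 0 < x ^ 2 + y ^ 2 := sq_add_sq_pos_of_ne_zero h
  have hpow : HasDerivAt (fun x ↦ (x ^ 2 + y ^ 2) ^ (1 + α / 2))
      (2 * x * (1 + α / 2) * (x ^ 2 + y ^ 2) ^ (α / 2)) x := by
    simpa using (hasDerivAt_sq_add_sq x y).rpow_const (p := 1 + α / 2) (.inl hr.ne')
  refine ((hasDerivAt_id x).div hpow (rpow_pos_of_pos hr _).ne').congr_deriv ?_
  have hq : (x ^ 2 + y ^ 2) ^ (α / 2) ≠ 0 := (rpow_pos_of_pos hr _).ne'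
  rw [rieszKernelDeriv, rpow_add hr, rpow_add hr, rpow_one, rpow_two]
  simp only [id_eq]
  field_simp
  ring

theorem continuousOn_rieszPotential (α : ℝ) :
    ContinuousOn (Function.uncurry (rieszPotential α)) {0}ᶜ := by
  have hprofile : ContinuousOn (rieszProfile α) (Set.Ioi 0) := fun _ hr ↦
    (hasDerivAt_rieszProfile α hr).continuousAt.continuousWithinAt
  exact hprofile.comp (f := fun p : ℝ × ℝ ↦ p.1 ^ 2 + p.2 ^ 2) (by fun_prop)
    fun _ hp ↦ sq_add_sq_pos_of_ne_zero hp

theorem continuousOn_rieszKernel (α : ℝ) :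
    ContinuousOn (Function.uncurry (rieszKernel α)) {0}ᶜ :=
  continuousOn_fst.div (continuousOn_sq_add_sq_rpow _) fun _ hp ↦
    (rpow_pos_of_pos (sq_add_sq_pos_of_ne_zero hp) _).ne'

theorem continuousOn_rieszKernelDeriv (α : ℝ) :
    ContinuousOn (Function.uncurry (rieszKernelDeriv α)) {0}ᶜ :=
  ContinuousOn.div (by fun_prop) (continuousOn_sq_add_sq_rpow _) fun _ hp ↦
    (rpow_pos_of_pos (sq_add_sq_pos_of_ne_zero hp) _).ne'

theorem setIntegral_Ioo_rieszKernel (α a : ℝ) {b c y : ℝ} (hbc : b ≤ c) (hy : y ≠ 0) :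
    ∫ x in Set.Ioo b c, rieszKernel α (a - x) y =
      rieszPotential α (a - b) y - rieszPotential α (a - c) y := by
  have hne (x : ℝ) : (x, y) ≠ 0 := fun h ↦ hy (Prod.mk_eq_zero.1 h).2
  have hcont : Continuous (rieszKernel α · y) :=
    (continuousOn_rieszKernel α).comp_continuous (f := fun x ↦ (x, y)) (by fun_prop) hne
  calc ∫ x in Set.Ioo b c, rieszKernel α (a - x) y
      = ∫ x in b..c, rieszKernel α (a - x) y := by
        rw [intervalIntegral.integral_of_le hbc, integral_Ioc_eq_integral_Ioo]
    _ = ∫ x in (a - c)..(a - b), rieszKernel α x y :=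
        intervalIntegral.integral_comp_sub_left (rieszKernel α · y) a
    _ = rieszPotential α (a - b) y - rieszPotential α (a - c) y :=
        intervalIntegral.integral_eq_sub_of_hasDerivAt
          (fun x _ ↦ hasDerivAt_rieszPotential α (hne x)) (hcont.intervalIntegrable _ _)

end RieszKernel

theorem stmt13_general (α : ℝ) {R : ℝ} {b c A : ℝ → ℝ} (hb : ContinuousOn b (Set.Icc 0 R))
    (hc : ContinuousOn c (Set.Icc 0 R)) (hbc : ∀ y ∈ Set.Ioo 0 R, b y ≤ c y)
    (hA : ∀ a, A a = ∫ y in Set.Ioo 0 R, ∫ x in Set.Ioo (b y) (c y),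
      (a - x) / ((a - x) ^ 2 + y ^ 2) ^ (1 + α / 2)) {a : ℝ} (hab : a ≠ b 0) (hac : a ≠ c 0) :
    DifferentiableAt ℝ A a ∧ DifferentiableAt ℝ (deriv A) a ∧
      deriv (deriv A) a = ∫ y in Set.Ioo 0 R,
        (((α + 1) * (a - c y) ^ 2 - y ^ 2) / ((a - c y) ^ 2 + y ^ 2) ^ (2 + α / 2) +
          (y ^ 2 - (α + 1) * (a - b y) ^ 2) / ((a - b y) ^ 2 + y ^ 2) ^ (2 + α / 2)) := by
  have hA_potential : A = fun a ↦
      ∫ y in Set.Icc 0 R, (rieszPotential α (a - b y) y - rieszPotential α (a - c y) y) := by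
    funext a
    rw [hA, integral_Icc_eq_integral_Ioo]
    exact setIntegral_congr_fun measurableSet_Ioo fun y hy ↦
      setIntegral_Ioo_rieszKernel α a (hbc y hy) hy.1.ne'
  have hderiv {x : ℝ} (hxb : x ≠ b 0) (hxc : x ≠ c 0) : HasDerivAt A
      (∫ y in Set.Icc 0 R, (rieszKernel α (x - b y) y - rieszKernel α (x - c y) y)) x :=
    hA_potential ▸ hasDerivAt_setIntegral_sub_graph
      (continuousOn_rieszPotential α) (continuousOn_rieszKernel α)
      (fun _ _ ↦ hasDerivAt_rieszPotential α) isCompact_Icc hb hc hxb hxc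
  have hderiv_eq : deriv A =ᶠ[nhds a] fun x ↦
      ∫ y in Set.Icc 0 R, (rieszKernel α (x - b y) y - rieszKernel α (x - c y) y) := by
    filter_upwards [isOpen_ne.mem_nhds hab, isOpen_ne.mem_nhds hac] with x hxb hxc
    exact (hderiv hxb hxc).deriv
  have hderiv2 : HasDerivAt (deriv A)
      (∫ y in Set.Icc 0 R, (rieszKernelDeriv α (a - b y) y - rieszKernelDeriv α (a - c y) y)) a :=
    (hasDerivAt_setIntegral_sub_graph (continuousOn_rieszKernel α)
      (continuousOn_rieszKernelDeriv α) (fun _ _ ↦ hasDerivAt_rieszKernel α) isCompact_Icc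
      hb hc hab hac).congr_of_eventuallyEq hderiv_eq
  refine ⟨(hderiv hab hac).differentiableAt, hderiv2.differentiableAt, hderiv2.deriv.trans ?_⟩
  rw [integral_Icc_eq_integral_Ioo]
  refine integral_congr_ae (.of_forall fun y ↦ ?_)
  simp only [rieszKernelDeriv]
  ring

theorem mul_le_of_lt_div_max_one {β M y : ℝ} (hy : 0 ≤ y) (h : y < M / max β 1) : β * y ≤ M :=
  calc β * y ≤ y * max β 1 := by rw [mul_comm]; gcongr; exact le_max_left β 1
    _ ≤ M := ((lt_div_iff₀ (by positivity)).1 h).le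

theorem stmt13 (α β M : ℝ) (hα0 : 0 ≤ α) (hα2 : α < 2) (hβ : 0 ≤ β) (hM : 0 < M)
    (A : ℝ → ℝ)
    (hA : ∀ a : ℝ, A a = ∫ y₂ in Set.Ioo 0 (M / max β 1),
      ∫ y₁ in Set.Ioo (β * y₂) M, (a - y₁) / ((a - y₁) ^ 2 + y₂ ^ 2) ^ (1 + α / 2)) :
    ∀ a ∈ Set.Ioo (0 : ℝ) M,
      DifferentiableAt ℝ A a ∧ DifferentiableAt ℝ (deriv A) a ∧
      deriv (deriv A) a = ∫ y₂ in Set.Ioo 0 (M / max β 1),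
        (((α + 1) * (a - M) ^ 2 - y₂ ^ 2) / ((a - M) ^ 2 + y₂ ^ 2) ^ (2 + α / 2) +
          (y₂ ^ 2 - (α + 1) * (a - β * y₂) ^ 2) / ((a - β * y₂) ^ 2 + y₂ ^ 2) ^ (2 + α / 2)) :=
  fun a ha ↦ stmt13_general α (b := (β * ·)) (c := fun _ ↦ M) (by fun_prop) (by fun_prop)
    (fun y hy ↦ mul_le_of_lt_div_max_one hy.1.le hy.2) hA (by simpa using ha.1.ne') ha.2.ne
end
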